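/- arXiv:1501.01448 — 3 statements merged into one kernel-verified Lean document; each statement's English description precedes it below -/
import Mathlib

section
/- Fix 0 ≤ i ≤ n. If x ∈ B is homogeneous of odd degree and D_i(x) = 0, then there exists y ∈ B with D_i(y) = x; that is, the complex (B, D_i) is exact in every odd degree. (This is the homological, predual form of the paper's Lemma 3.2.) -/
/-!
`(B, D_i)` is the Koszul complex of the regular sequence `ξ_{k-i}^{p^i}`, `k ≥ n+1`, so it is exact
at every monomial involving some `τ`; a monomial of odd degree involves an odd number of them.

Exactness comes from an explicit contracting homotopy `htpy`. Call `k` *active* for the monomial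
`(e, S)` if `τ_{n+1+k}` divides it or `ξ_{n+1+k-i}^{p^i}` does. `D_i` trades `τ_{n+1+k}` for
`ξ_{n+1+k-i}^{p^i}`, so every term of `D_i (e, S)` has the same active set (`active_step`). The
homotopy trades `ξ_{n+1+k-i}^{p^i}` back for `τ_{n+1+k}` at the least active index `k`, and is `0` if
`τ_{n+1+k}` is already present. Since `k` precedes every other index in `S`, the new factor stands
first: it carries the sign `+1` and flips all other signs, whence `D h + h D = id` on monomials with
`S ≠ ∅` (`homotopy_mon`). A cycle `x` supported on such monomials is therefore `D (h x)`.
-/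

/-!
Common setup: `B` is the `𝔽_p`-algebra
`𝔽_p[ξ_1, ξ_2, …] ⊗ Λ(τ_{n+1}, τ_{n+2}, …)`,
presented via its monomial basis.  A monomial is encoded as a pair
`(e, S) : (ℕ →₀ ℕ) × Finset ℕ`, standing for
`∏_j ξ_{j+1} ^ (e j) · ∏_{k ∈ S} τ_{n+1+k}`
(the index shift makes every `e : ℕ →₀ ℕ` and every `S : Finset ℕ` legal:
`ξ`-indices are `≥ 1` and `τ`-indices are `≥ n+1`).
-/

/-- Monomials of `B = 𝔽_p[ξ_1, ξ_2, …] ⊗ Λ(τ_{n+1}, …)`: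
`(e, S)` encodes `∏_j ξ_{j+1}^(e j) · ∏_{k ∈ S} τ_{n+1+k}`. -/
abbrev Mon : Type := (ℕ →₀ ℕ) × Finset ℕ

/-- Degree of a monomial: `deg ξ_j = 2p^j - 2`, `deg τ_k = 2p^k - 1`. -/
def monDeg (p n : ℕ) (m : Mon) : ℕ :=
  m.1.sum (fun j e => e * (2 * p ^ (j + 1) - 2)) + ∑ k ∈ m.2, (2 * p ^ (n + 1 + k) - 1)

/-- Weight of a monomial: `wt ξ_j = 2p^j`, `wt τ_k = 2p^k`. -/
def monWt (p n : ℕ) (m : Mon) : ℕ :=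
  m.1.sum (fun j e => e * (2 * p ^ (j + 1))) + ∑ k ∈ m.2, 2 * p ^ (n + 1 + k)

/-- `B`, the mod `p` homology of `BP⟨n⟩`, as the free `𝔽_p`-vector space on
its monomial basis. -/
abbrev B (p : ℕ) : Type := Mon →₀ ZMod p

/-- `x ∈ B` is homogeneous of degree `δ`. -/
def IsHomog (p n : ℕ) (x : B p) (δ : ℕ) : Prop := ∀ m ∈ x.support, monDeg p n m = δ

/-- `x ∈ B` is homogeneous of weight `w`. -/
def IsWeight (p n : ℕ) (x : B p) (w : ℕ) : Prop := ∀ m ∈ x.support, monWt p n m = w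

/-- Value of `D_i` on the basis monomial `(e, S)`:
`Σ_{a=1}^{r} (−1)^(a−1) ξ^e · ξ_{k_a−i}^(p^i) · τ_{k_1} ⋯ τ̂_{k_a} ⋯ τ_{k_r}`,
where `S = {k_1 < … < k_r}`.  In the encoding, removing `τ_{n+1+k}` (i.e. `k ∈ S`)
adds `p^i` to the exponent of `ξ_{(n+1+k)−i}`, whose `ξ`-index is `n+k−i`,
and the sign is `(−1)^#{k' ∈ S | k' < k}`. -/
noncomputable def Dmon (p n i : ℕ) (m : Mon) : B p :=
  ∑ k ∈ m.2, ((-1 : ZMod p) ^ ((m.2.filter (fun k' => k' < k)).card)) •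
    Finsupp.single (m.1 + Finsupp.single (n + k - i) (p ^ i), m.2.erase k) (1 : ZMod p)

/-- The `𝔽_p`-linear map `D_i : B → B`, dual to the Milnor primitive `Q_i`. -/
noncomputable def D (p n i : ℕ) : B p →ₗ[ZMod p] B p :=
  Finsupp.linearCombination (ZMod p) (Dmon p n i)

/-- `k` is active for `(e, S)` if `τ_{n+1+k}` or `ξ_{n+1+k-i}^{p^i}` divides the monomial. -/
def Active (p n i : ℕ) (m : Mon) (k : ℕ) : Prop := k ∈ m.2 ∨ p ^ i ≤ m.1 (n + k - i)

/-- The least active index of a monomial (the junk value `0` if there is none). -/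
noncomputable def lead (p n i : ℕ) (m : Mon) : ℕ := sInf {k | Active p n i m k}

/-- The contracting homotopy on a monomial: at the least active index `k`, replace
`ξ_{n+1+k-i}^{p^i}` by `τ_{n+1+k}`; it is `0` if `τ_{n+1+k}` is already present, or if no index is
active. -/
noncomputable def hmon (p n i : ℕ) (m : Mon) : B p :=
  if lead p n i m ∈ m.2 then 0
  else if p ^ i ≤ m.1 (n + lead p n i m - i) then
    Finsupp.single (m.1 - Finsupp.single (n + lead p n i m - i) (p ^ i),
      insert (lead p n i m) m.2) 1
  else 0

/-- The linear extension of `hmon` to `B`. -/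
noncomputable def htpy (p n i : ℕ) : B p →ₗ[ZMod p] B p :=
  Finsupp.linearCombination (ZMod p) (hmon p n i)

/-- The monomial obtained from `m` by replacing `τ_{n+1+l}` by `ξ_{n+1+l-i}^{p^i}`. -/
noncomputable def step (p n i : ℕ) (m : Mon) (l : ℕ) : Mon :=
  (m.1 + Finsupp.single (n + l - i) (p ^ i), m.2.erase l)

/-- The sign of the `l`-term of `D_i` on a monomial with exterior part `S`. -/
def sgn (p : ℕ) (S : Finset ℕ) (l : ℕ) : ZMod p :=
  (-1 : ZMod p) ^ ((S.filter (fun k' => k' < l)).card)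

lemma Dmon_eq (p n i : ℕ) (m : Mon) :
    Dmon p n i m = ∑ l ∈ m.2, sgn p m.2 l • Finsupp.single (step p n i m l) (1 : ZMod p) := rfl

lemma D_single (p n i : ℕ) (m : Mon) : D p n i (Finsupp.single m 1) = Dmon p n i m := by
  simp [D]

lemma htpy_single (p n i : ℕ) (m : Mon) :
    htpy p n i (Finsupp.single m 1) = hmon p n i m := by
  simp [htpy]

lemma active_step {p n i : ℕ} (hi : i ≤ n) {m : Mon} {l : ℕ} (hl : l ∈ m.2) (k : ℕ) :
    Active p n i (step p n i m l) k ↔ Active p n i m k := by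
  unfold Active step
  by_cases h : k = l
  · subst h; simp [hl]
  · have h' : n + l - i ≠ n + k - i := by omega
    simp [h, Finsupp.single_eq_of_ne' h']

lemma lead_step {p n i : ℕ} (hi : i ≤ n) {m : Mon} {l : ℕ} (hl : l ∈ m.2) :
    lead p n i (step p n i m l) = lead p n i m := by
  simp only [lead, active_step hi hl]

lemma sgn_of_le {p : ℕ} {S : Finset ℕ} {k : ℕ} (h : ∀ l ∈ S, k ≤ l) : sgn p S k = 1 := by
  have : S.filter (fun k' => k' < k) = ∅ :=
    Finset.filter_eq_empty_iff.2 fun l hl => not_lt.2 (h l hl)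
  simp [sgn, this]

lemma sgn_insert {p : ℕ} {S : Finset ℕ} {k l : ℕ} (hk : k ∉ S) (h : k < l) :
    sgn p (insert k S) l = - sgn p S l := by
  unfold sgn
  rw [Finset.filter_insert, if_pos h, Finset.card_insert_of_notMem (by simp [hk]), pow_succ]
  ring

/-- The homotopy identity `D h + h D = id` on monomials involving some `τ`. -/
lemma homotopy_mon {p n i : ℕ} (hi : i ≤ n) (m : Mon) (hm : m.2.Nonempty) :
    D p n i (hmon p n i m) + htpy p n i (Dmon p n i m) = Finsupp.single m 1 := by
  obtain ⟨k, hk⟩ : ∃ k, lead p n i m = k := ⟨_, rfl⟩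
  have hact : Active p n i m k := by
    obtain ⟨a, ha⟩ := hm
    rw [← hk]
    exact Nat.sInf_mem (s := {k | Active p n i m k}) ⟨a, Or.inl ha⟩
  have hle : ∀ l ∈ m.2, k ≤ l := fun l hl => by
    rw [← hk]
    exact Nat.sInf_le (s := {k | Active p n i m k}) (Or.inl hl)
  have hD : htpy p n i (Dmon p n i m) =
      ∑ l ∈ m.2, sgn p m.2 l • hmon p n i (step p n i m l) := by
    simp only [Dmon_eq, map_sum, map_smul, htpy_single]
  rw [hD]
  by_cases hkS : k ∈ m.2
  · -- `h m = 0`, and only the term of `D m` which has lost `τ_{n+1+k}` survives `h`.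
    have h0 : hmon p n i m = 0 := by simp [hmon, hk, hkS]
    rw [h0, map_zero, zero_add, Finset.sum_eq_single k]
    · rw [sgn_of_le hle, one_smul, hmon, lead_step hi hkS, hk]
      simp [step, Finset.insert_erase hkS]
    · intro l hl hlk
      rw [hmon, lead_step hi hl, hk, if_pos, smul_zero]
      simp [step, hkS, Ne.symm hlk]
    · exact fun h => absurd hkS h
  · have hq : p ^ i ≤ m.1 (n + k - i) := hact.resolve_left hkS
    have hsub : Finsupp.single (n + k - i) (p ^ i) ≤ m.1 := Finsupp.single_le_iff.2 hq
    have hlt : ∀ l ∈ m.2, k < l := fun l hl =>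
      lt_of_le_of_ne (hle l hl) fun h => hkS (h ▸ hl)
    have hm' : hmon p n i m = Finsupp.single
        (m.1 - Finsupp.single (n + k - i) (p ^ i), insert k m.2) 1 := by
      simp [hmon, hk, hkS, hq]
    -- The `k`-term of `D (h m)` is `m`; the others cancel against `h (D m)`.
    rw [hm', D_single, Dmon_eq, Finset.sum_insert hkS, add_assoc, ← Finset.sum_add_distrib,
      Finset.sum_eq_zero, add_zero]
    · rw [sgn_of_le (by simpa using hle), one_smul, step]
      simp only
      rw [tsub_add_cancel_of_le hsub, Finset.erase_insert hkS]
    · intro l hl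
      have hne : n + l - i ≠ n + k - i := by have := hlt l hl; omega
      have hs : hmon p n i (step p n i m l) = Finsupp.single (step p n i
          (m.1 - Finsupp.single (n + k - i) (p ^ i), insert k m.2) l) 1 := by
        rw [hmon, lead_step hi hl, hk, if_neg (by simp [step, hkS]), if_pos]
        · simp only [step]
          rw [tsub_add_eq_add_tsub hsub, Finset.erase_insert_of_ne (hlt l hl).ne]
        · simp only [step, Finsupp.add_apply]
          omega
      rw [hs, sgn_insert hkS (hlt l hl), neg_smul, neg_add_cancel]

/-- A monomial of odd degree involves some `τ`, as every `ξ_j` has even degree. -/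
lemma nonempty_of_odd {p n : ℕ} {m : Mon} (h : Odd (monDeg p n m)) : m.2.Nonempty := by
  by_contra hS
  rw [Finset.not_nonempty_iff_eq_empty] at hS
  refine Nat.not_even_iff_odd.2 h ?_
  rw [monDeg, hS, Finset.sum_empty, add_zero]
  refine Finset.even_sum _ fun j _ => Even.mul_left ?_ _
  exact ⟨p ^ (j + 1) - 1, by omega⟩

/-- if `x ∈ B` is homogeneous of odd degree and `D_i x = 0`, then
`x = D_i y` for some `y`; i.e. `(B, D_i)` is exact in odd degrees. -/
theorem stmt4 (p n i : ℕ) [Fact p.Prime] (hi : i ≤ n) (x : B p) (δ : ℕ)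
    (hx : IsHomog p n x δ) (hδ : Odd δ) (hD : D p n i x = 0) :
    ∃ y : B p, D p n i y = x := by
  have key : ∀ z : B p, (∀ m ∈ z.support, m.2.Nonempty) →
      D p n i (htpy p n i z) + htpy p n i (D p n i z) = z := by
    intro z hz
    have hz' : z = ∑ m ∈ z.support, z m • Finsupp.single m (1 : ZMod p) := by
      conv_lhs => rw [← Finsupp.sum_single z]
      simp [Finsupp.sum]
    conv_rhs => rw [hz']
    conv_lhs => rw [hz']
    simp only [map_sum, map_smul, htpy_single, D_single]
    rw [← Finset.sum_add_distrib]
    refine Finset.sum_congr rfl fun m hm => ?_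
    rw [← smul_add, homotopy_mon hi m (hz m hm)]
  refine ⟨htpy p n i x, ?_⟩
  have h := key x fun m hm => nonempty_of_odd (p := p) (n := n) (by rw [hx m hm]; exact hδ)
  rwa [hD, map_zero, add_zero] at h
end

section
/- For every left E-module M and every integer s ≥ 0, the s-th cohomology of the cochain complex K(M) is isomorphic as an F_p-vector space to Ext_E^s(F_p, M), the s-th Ext group in the category of E-modules of the augmentation module F_p with coefficients in M. (This is the Koszul-resolution computation of Ext over an exterior algebra used to identify the Adams E₂-page.) -/
/-!
The Koszul resolution `P` of `𝔽_p` over `E` computes `Ext`. Its term `P_s` is the free `E`-module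
on the monomials `v^a` of degree `s`, whose basis vector `e_a` stands for the divided power dual to
`v^a`, and its differential is `d e_a = ∑ i, Q_i e_{a - δ_i}`, the sum over the `i` with `a_i > 0`.

Exactness in positive degree is shown one variable at a time. For each `j` let
`h_j` raise the exponent of `v_j` by one and contract the coefficient against `Q_j`. Then
`d h_j + h_j d = 1 - π_j` (`kosD_kosH`), where `π_j` kills every `e_a` with `a_j > 0` and preserves
the absence of the other variables. Hence a cycle is homologous to one in which no variable occurs
(`exists_homologous`), and in positive degree such a cycle vanishes (`kosD_exact`). In degree `0`
exactness says that the augmentation ideal is generated by the `Q_i` (`exists_kosD_eq`).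

Evaluation on the basis `e_a` and the monomial basis of `𝔽_p[v]_s` both identify the respective
spaces with functions from the monomials of degree `s` to `M`, so that
`Hom_E(P_s, M) ≃ M ⊗ 𝔽_p[v]_s`. Under this isomorphism, precomposition with `d` is the differential
of `K(M)` (`homEquiv_KD`), and the theorem follows by passing to cohomology. The `𝔽_p`-structure on
`Ext` comes from the `E`-module structure of `M` through `𝔽_p → E`; it agrees with the given one on
`M` because of the scalar tower.
-/

open CategoryTheory

/-- The exterior algebra `E = Λ_{𝔽_p}(Q_0, …, Q_n)` over `𝔽_p` on the `n+1`
generators `Q_0, …, Q_n`, realized as the exterior algebra of the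
`(n+1)`-dimensional vector space with standard basis. -/
abbrev ExtAlg (p n : ℕ) : Type := ExteriorAlgebra (ZMod p) (Fin (n + 1) → ZMod p)

/-- The generator `Q_i ∈ E`. -/
noncomputable def Qgen (p n : ℕ) (i : Fin (n + 1)) : ExtAlg p n :=
  ExteriorAlgebra.ι (ZMod p) (Pi.single i 1)

/-- `𝔽_p` regarded as a left `E`-module via the augmentation `E → 𝔽_p`
sending each `Q_i` to `0`. -/
def Aug (p n : ℕ) : Type := ZMod p

instance (p n : ℕ) : AddCommGroup (Aug p n) := inferInstanceAs (AddCommGroup (ZMod p))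

noncomputable instance (p n : ℕ) : Module (ExtAlg p n) (Aug p n) :=
  Module.compHom (ZMod p)
    (ExteriorAlgebra.algebraMapInv :
      ExtAlg p n →ₐ[ZMod p] ZMod p).toRingHom

/-- The space of degree-`s` homogeneous polynomials in the commuting
variables `v_0, …, v_n` over `𝔽_p`. -/
abbrev PolyS (p n s : ℕ) : Submodule (ZMod p) (MvPolynomial (Fin (n + 1)) (ZMod p)) :=
  MvPolynomial.homogeneousSubmodule (Fin (n + 1)) (ZMod p) s

/-- The `s`-th term `M ⊗_{𝔽_p} 𝔽_p[v_0, …, v_n]_s` of the Koszul-type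
cochain complex `K(M)`. -/
abbrev KTerm (p n : ℕ) (M : Type) [AddCommGroup M] [Module (ZMod p) M] (s : ℕ) : Type :=
  TensorProduct (ZMod p) M (PolyS p n s)

/-- The action of the generator `Q_i ∈ E` on a left `E`-module `M`, as an
`𝔽_p`-linear endomorphism. -/
noncomputable def QAct (p n : ℕ) (M : Type) [AddCommGroup M] [Module (ZMod p) M]
    [Module (ExtAlg p n) M] [IsScalarTower (ZMod p) (ExtAlg p n) M] (i : Fin (n + 1)) :
    M →ₗ[ZMod p] M where
  toFun m := Qgen p n i • m
  map_add' m m' := smul_add _ m m'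
  map_smul' c m := (smul_comm (Qgen p n i) c m)

/-- Multiplication by `v_i` as a linear map of homogeneous components,
`𝔽_p[v]_s → 𝔽_p[v]_(s+1)`. -/
noncomputable def mulX (p n s : ℕ) (i : Fin (n + 1)) :
    PolyS p n s →ₗ[ZMod p] PolyS p n (s + 1) :=
  (LinearMap.mulLeft (ZMod p) (MvPolynomial.X i)).restrict fun q hq => by
    rw [MvPolynomial.mem_homogeneousSubmodule] at hq ⊢
    simpa [Nat.add_comm] using (MvPolynomial.isHomogeneous_X (ZMod p) i).mul hq

/-- The differential of the complex `K(M)`: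
`m ⊗ q ↦ Σ_{i=0}^{n} (Q_i • m) ⊗ v_i·q`. -/
noncomputable def KD (p n : ℕ) (M : Type) [AddCommGroup M] [Module (ZMod p) M]
    [Module (ExtAlg p n) M] [IsScalarTower (ZMod p) (ExtAlg p n) M] (s : ℕ) :
    KTerm p n M s →ₗ[ZMod p] KTerm p n M (s + 1) :=
  ∑ i : Fin (n + 1), TensorProduct.map (QAct p n M i) (mulX p n s i)

/-- The differential of `K(M)` entering the `s`-th term (zero for `s = 0`). -/
noncomputable def KDto (p n : ℕ) (M : Type) [AddCommGroup M] [Module (ZMod p) M]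
    [Module (ExtAlg p n) M] [IsScalarTower (ZMod p) (ExtAlg p n) M] :
    (s : ℕ) → (KTerm p n M (s - 1) →ₗ[ZMod p] KTerm p n M s)
  | 0 => 0
  | s + 1 => KD p n M s

/-- The `s`-th cohomology of the cochain complex `K(M)`:
`ker(K(M)^s → K(M)^(s+1)) / im(K(M)^(s-1) → K(M)^s)`. -/
noncomputable abbrev KH (p n : ℕ) (M : Type) [AddCommGroup M] [Module (ZMod p) M]
    [Module (ExtAlg p n) M] [IsScalarTower (ZMod p) (ExtAlg p n) M] (s : ℕ) : Type :=
  LinearMap.ker (KD p n M s) ⧸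
    Submodule.comap (LinearMap.ker (KD p n M s)).subtype (LinearMap.range (KDto p n M s))

namespace Koszul

/-! ### The Koszul differential and its partial contracting homotopies -/

/-- The free `E`-module on all monomials `v^a`; a basis vector `single a 1` stands for the divided
power dual to `v^a`. It is the direct sum of all terms of the Koszul resolution. -/
abbrev KosTot (p n : ℕ) : Type := (Fin (n + 1) →₀ ℕ) →₀ ExtAlg p n

/-- The `i`-th summand of the Koszul differential: it lowers the exponent of `v_i` by one and
multiplies the coefficient by `Q_i` on the right, and kills `single a x` if `v_i ∤ v^a`. -/
noncomputable def kosDPart (p n : ℕ) (i : Fin (n + 1)) : KosTot p n →ₗ[ExtAlg p n] KosTot p n :=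
  Finsupp.linearCombination (ExtAlg p n) fun a =>
    if a i = 0 then 0 else Finsupp.single (a - Finsupp.single i 1) (Qgen p n i)

/-- The Koszul differential. -/
noncomputable def kosD (p n : ℕ) : KosTot p n →ₗ[ExtAlg p n] KosTot p n :=
  ∑ i, kosDPart p n i

/-- The right contraction of `E` against the `j`-th coordinate functional. -/
noncomputable def contr (p n : ℕ) (j : Fin (n + 1)) : ExtAlg p n →ₗ[ZMod p] ExtAlg p n :=
  (CliffordAlgebra.contractRight (Q := (0 : QuadraticForm (ZMod p) (Fin (n + 1) → ZMod p)))).flip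
    (LinearMap.proj j)

/-- The partial contracting homotopy in the direction `j`: raise the exponent of `v_j` by one and
contract the coefficient against `Q_j`. It is additive, but not `E`-linear. -/
noncomputable def kosH (p n : ℕ) (j : Fin (n + 1)) : KosTot p n →+ KosTot p n :=
  Finsupp.liftAddHom fun a =>
    (Finsupp.singleAddHom (a + Finsupp.single j 1)).comp (contr p n j).toAddMonoidHom

/-- The chain map to which `kosH j` deforms the identity: it kills `single a x` when `v_j ∣ v^a`,
and otherwise removes the terms of `x` involving `Q_j`. -/
noncomputable def kosPi (p n : ℕ) (j : Fin (n + 1)) : KosTot p n →+ KosTot p n :=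
  Finsupp.liftAddHom fun a =>
    if a j = 0 then (Finsupp.singleAddHom a).comp
      (AddMonoidHom.id _ - (AddMonoidHom.mulRight (Qgen p n j)).comp (contr p n j).toAddMonoidHom)
    else 0

variable {p n : ℕ}

lemma contr_mul_Qgen (i j : Fin (n + 1)) (x : ExtAlg p n) :
    contr p n j (x * Qgen p n i) = (if i = j then x else 0) - contr p n j x * Qgen p n i := by
  have := CliffordAlgebra.contractRight_mul_ι
    (Q := (0 : QuadraticForm (ZMod p) (Fin (n + 1) → ZMod p)))
    (LinearMap.proj j) (Pi.single i 1) x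
  refine this.trans ?_
  congr 1
  by_cases h : i = j
  · subst h; simp
  · simp [h, Ne.symm h]

lemma Qgen_mul_self (i : Fin (n + 1)) : Qgen p n i * Qgen p n i = 0 :=
  ExteriorAlgebra.ι_sq_zero _

lemma Qgen_mul_comm (i j : Fin (n + 1)) : Qgen p n i * Qgen p n j = -(Qgen p n j * Qgen p n i) :=
  eq_neg_of_add_eq_zero_left (ExteriorAlgebra.ι_add_mul_swap _ _)

lemma kosDPart_single (i : Fin (n + 1)) (a : Fin (n + 1) →₀ ℕ) (x : ExtAlg p n) :
    kosDPart p n i (Finsupp.single a x) =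
      if a i = 0 then 0 else Finsupp.single (a - Finsupp.single i 1) (x * Qgen p n i) := by
  rw [kosDPart, Finsupp.linearCombination_single]
  split_ifs <;> simp

lemma kosH_single (j : Fin (n + 1)) (a : Fin (n + 1) →₀ ℕ) (x : ExtAlg p n) :
    kosH p n j (Finsupp.single a x) =
      Finsupp.single (a + Finsupp.single j 1) (contr p n j x) := by
  simp [kosH]

lemma kosPi_single (j : Fin (n + 1)) (a : Fin (n + 1) →₀ ℕ) (x : ExtAlg p n) :
    kosPi p n j (Finsupp.single a x) =
      if a j = 0 then Finsupp.single a (x - contr p n j x * Qgen p n j) else 0 := by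
  rw [kosPi, Finsupp.liftAddHom_apply_single]
  split_ifs <;> simp

lemma kosDPart_kosH (i j : Fin (n + 1)) (z : KosTot p n) :
    kosDPart p n i (kosH p n j z) + kosH p n j (kosDPart p n i z) =
      if i = j then z - kosPi p n j z else 0 := by
  induction z using Finsupp.induction_linear with
  | zero => simp
  | add f g hf hg =>
    simp only [map_add]
    rw [add_add_add_comm, hf, hg]
    split_ifs
    · abel
    · simp
  | single a x =>
    rw [kosH_single, kosDPart_single, kosDPart_single, kosPi_single]
    by_cases hij : i = j
    · subst hij
      by_cases ha : a i = 0
      · simp [ha, ← Finsupp.single_sub]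
      · have h1 : a - Finsupp.single i 1 + Finsupp.single i 1 = a :=
          tsub_add_cancel_of_le (by simpa [Nat.one_le_iff_ne_zero] using ha)
        simp [ha, kosH_single, contr_mul_Qgen, h1, -Finsupp.single_mul]
    · by_cases ha : a i = 0
      · simp [ha, hij]
      · have h1 : a - Finsupp.single i 1 + Finsupp.single j 1 =
            a + Finsupp.single j 1 - Finsupp.single i 1 :=
          tsub_add_eq_add_tsub (by simpa [Nat.one_le_iff_ne_zero] using ha)
        simp [ha, hij, kosH_single, contr_mul_Qgen, h1, -Finsupp.single_mul]

/-- `kosH j` is a chain homotopy from `kosPi j` to the identity. -/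
lemma kosD_kosH (j : Fin (n + 1)) (z : KosTot p n) :
    kosD p n (kosH p n j z) + kosH p n j (kosD p n z) = z - kosPi p n j z := by
  simp only [kosD, LinearMap.sum_apply, map_sum, ← Finset.sum_add_distrib, kosDPart_kosH]
  simp

lemma kosDPart_comm (i j : Fin (n + 1)) (z : KosTot p n) :
    kosDPart p n i (kosDPart p n j z) + kosDPart p n j (kosDPart p n i z) = 0 := by
  induction z using Finsupp.induction_linear with
  | zero => simp
  | add f g hf hg =>
    simp only [map_add]
    rw [add_add_add_comm, hf, hg, add_zero]
  | single a x =>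
    simp only [kosDPart_single]
    by_cases hij : i = j
    · subst hij
      split_ifs <;> simp [kosDPart_single, mul_assoc, Qgen_mul_self, -Finsupp.single_mul]
    · by_cases hi : a i = 0 <;> by_cases hj : a j = 0 <;>
        simp [hi, hj, kosDPart_single, hij, Ne.symm hij, -Finsupp.single_mul, mul_assoc,
          Qgen_mul_comm i j,
          tsub_right_comm (a := a) (b := Finsupp.single i 1)]

lemma kosDPart_self (i : Fin (n + 1)) (z : KosTot p n) :
    kosDPart p n i (kosDPart p n i z) = 0 := by
  induction z using Finsupp.induction_linear with
  | zero => simp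
  | add f g hf hg => simp [hf, hg]
  | single a x =>
    rw [kosDPart_single]
    split_ifs <;> simp [kosDPart_single, mul_assoc, Qgen_mul_self, -Finsupp.single_mul]

lemma kosD_kosD (z : KosTot p n) : kosD p n (kosD p n z) = 0 := by
  simp only [kosD, LinearMap.sum_apply, map_sum]
  rw [← Finset.sum_product']
  refine Finset.sum_involution (fun q _ => q.swap) ?_ ?_ ?_ ?_
  · intro q _
    exact kosDPart_comm _ _ _
  · rintro ⟨i, j⟩ _ h h'
    obtain rfl : j = i := congrArg Prod.fst h'
    exact h (kosDPart_self _ _)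
  · simp
  · simp

/-! ### Exactness -/

variable (p n) in
/-- The `s`-th term of the Koszul resolution: the free `E`-module on the monomials of degree `s`. -/
abbrev KosDeg (s : ℕ) : Submodule (ExtAlg p n) (KosTot p n) :=
  Finsupp.supported (ExtAlg p n) (ExtAlg p n) {a | a.degree = s}

lemma map_mem_of_supported {A : Set (Fin (n + 1) →₀ ℕ)}
    (B : Submodule (ExtAlg p n) (KosTot p n)) (f : KosTot p n →+ KosTot p n)
    (hf : ∀ a ∈ A, ∀ x, f (Finsupp.single a x) ∈ B) {z : KosTot p n}
    (hz : z ∈ Finsupp.supported (ExtAlg p n) (ExtAlg p n) A) : f z ∈ B := by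
  rw [← Finsupp.sum_single z, Finsupp.sum, map_sum]
  exact B.sum_mem fun a ha => hf a (hz ha) _

lemma kosD_mem {s : ℕ} {z : KosTot p n} (hz : z ∈ KosDeg p n (s + 1)) :
    kosD p n z ∈ KosDeg p n s := by
  refine map_mem_of_supported _ (kosD p n).toAddMonoidHom (fun a ha x => ?_) hz
  simp only [kosD, LinearMap.toAddMonoidHom_coe, LinearMap.sum_apply, kosDPart_single]
  refine Submodule.sum_mem _ fun i _ => ?_
  split_ifs with h
  · exact zero_mem _
  · refine Finsupp.single_mem_supported _ _ ?_
    have h1 : a - Finsupp.single i 1 + Finsupp.single i 1 = a :=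
      tsub_add_cancel_of_le (by simpa [Nat.one_le_iff_ne_zero] using h)
    have h2 : a.degree = s + 1 := ha
    rw [← h1, map_add, Finsupp.degree_single] at h2
    simpa using h2

lemma kosH_mem (j : Fin (n + 1)) {s : ℕ} {z : KosTot p n} (hz : z ∈ KosDeg p n s) :
    kosH p n j z ∈ KosDeg p n (s + 1) := by
  refine map_mem_of_supported _ (kosH p n j) (fun a ha x => ?_) hz
  rw [kosH_single]
  refine Finsupp.single_mem_supported _ _ ?_
  have h2 : a.degree = s := ha
  simp [h2]

lemma kosPi_mem (j : Fin (n + 1)) (S : Finset (Fin (n + 1))) {z : KosTot p n}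
    (hz : z ∈ Finsupp.supported (ExtAlg p n) (ExtAlg p n) {a | ∀ i ∈ S, a i = 0}) :
    kosPi p n j z ∈
      Finsupp.supported (ExtAlg p n) (ExtAlg p n) {a | ∀ i ∈ insert j S, a i = 0} := by
  refine map_mem_of_supported _ (kosPi p n j) (fun a ha x => ?_) hz
  rw [kosPi_single]
  split_ifs with h
  · refine Finsupp.single_mem_supported _ _ fun i hi => ?_
    rcases Finset.mem_insert.1 hi with rfl | hi
    · exact h
    · exact ha i hi
  · exact zero_mem _

/-- Every cycle is homologous to one that involves none of the variables `v_i`, `i ∈ S`: the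
homotopies `kosH i` remove these variables one after the other. -/
lemma exists_homologous (S : Finset (Fin (n + 1))) {s : ℕ} {z : KosTot p n}
    (hz : z ∈ KosDeg p n s) (hD : kosD p n z = 0) :
    ∃ w ∈ KosDeg p n (s + 1), z - kosD p n w ∈
      Finsupp.supported (ExtAlg p n) (ExtAlg p n) {a | ∀ i ∈ S, a i = 0} := by
  induction S using Finset.induction_on with
  | empty => exact ⟨0, zero_mem _, by simp⟩
  | insert j S _ ih =>
    obtain ⟨w, hw, hzw⟩ := ih
    have hz' : z - kosD p n w ∈ KosDeg p n s := sub_mem hz (kosD_mem hw)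
    refine ⟨w + kosH p n j (z - kosD p n w), add_mem hw (kosH_mem j hz'), ?_⟩
    have h := kosD_kosH j (z - kosD p n w)
    rw [map_sub (kosD p n) z, hD, kosD_kosD, sub_zero, map_zero, add_zero] at h
    rw [map_add, h, ← sub_sub, sub_sub_cancel]
    exact kosPi_mem j S hzw

lemma kosD_exact {s : ℕ} {z : KosTot p n} (hz : z ∈ KosDeg p n (s + 1)) (hD : kosD p n z = 0) :
    ∃ w ∈ KosDeg p n (s + 2), kosD p n w = z := by
  obtain ⟨w, hw, h⟩ := exists_homologous Finset.univ hz hD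
  refine ⟨w, hw, (sub_eq_zero.1 ?_).symm⟩
  have h' : z - kosD p n w ∈ KosDeg p n (s + 1) := sub_mem hz (kosD_mem hw)
  rw [← Finsupp.support_eq_empty, Finset.eq_empty_iff_forall_notMem]
  intro a ha
  have h0 : a = 0 := Finsupp.ext fun i => h ha i (Finset.mem_univ i)
  have h1 : a.degree = s + 1 := h' ha
  simp [h0] at h1

variable (p n) in
/-- The augmentation `E → 𝔽_p`. -/
noncomputable abbrev aug : ExtAlg p n →ₐ[ZMod p] ZMod p := ExteriorAlgebra.algebraMapInv

lemma aug_Qgen (i : Fin (n + 1)) : aug p n (Qgen p n i) = 0 := by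
  simp [aug, Qgen, ExteriorAlgebra.algebraMapInv]

lemma kosD_single_single (i : Fin (n + 1)) (x : ExtAlg p n) :
    kosD p n (Finsupp.single (Finsupp.single i 1) x) = Finsupp.single 0 (x * Qgen p n i) := by
  rw [kosD, LinearMap.sum_apply, Finset.sum_eq_single i]
  · simp [kosDPart_single]
  · intro j _ hj
    simp [kosDPart_single, hj.symm]
  · simp

/-- The augmentation ideal is generated, as a left ideal, by the `Q_i`. -/
lemma exists_kosD_eq (x : ExtAlg p n) : ∃ w ∈ KosDeg p n 1,
    kosD p n w = Finsupp.single 0 (x - algebraMap (ZMod p) _ (aug p n x)) := by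
  induction x using ExteriorAlgebra.induction with
  | algebraMap r => exact ⟨0, zero_mem _, by simp⟩
  | ι v =>
    refine ⟨∑ i, Finsupp.single (Finsupp.single i 1) (algebraMap (ZMod p) _ (v i)),
      Submodule.sum_mem _ fun i _ => Finsupp.single_mem_supported _ _ (by simp), ?_⟩
    simp only [map_sum, kosD_single_single]
    rw [← Finsupp.single_finsetSum]
    congr 1
    have h : aug p n (ExteriorAlgebra.ι (ZMod p) v) = 0 := by
      simp [aug, ExteriorAlgebra.algebraMapInv]
    rw [h, map_zero, sub_zero]
    conv_rhs => rw [pi_eq_sum_univ' v, map_sum]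
    refine Finset.sum_congr rfl fun i _ => ?_
    rw [map_smul, Algebra.smul_def, Qgen]
  | mul x y hx hy =>
    obtain ⟨w, hw, hw'⟩ := hx
    obtain ⟨u, hu, hu'⟩ := hy
    refine ⟨x • u + algebraMap (ZMod p) (ExtAlg p n) (aug p n y) • w,
      add_mem (Submodule.smul_mem _ _ hu) (Submodule.smul_mem _ _ hw), ?_⟩
    rw [map_add, map_smul, map_smul, hw', hu', Finsupp.smul_single, Finsupp.smul_single,
      ← Finsupp.single_add]
    congr 1
    rw [smul_eq_mul, smul_eq_mul, Algebra.commutes (aug p n y), map_mul, map_mul]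
    noncomm_ring
  | add x y hx hy =>
    obtain ⟨w, hw, hw'⟩ := hx
    obtain ⟨u, hu, hu'⟩ := hy
    refine ⟨w + u, add_mem hw hu, ?_⟩
    rw [map_add, hw', hu', ← Finsupp.single_add]
    congr 1
    simp only [map_add]
    abel

/-! ### Homogeneous polynomials and their monomial basis -/

/-- The exponents of the monomials of degree `s` in `v_0, …, v_n`. -/
abbrev Mon (n s : ℕ) : Type := {a : Fin (n + 1) →₀ ℕ | a.degree = s}

instance (s : ℕ) : Finite (Mon n s) := Finsupp.finite_of_degree_eq s

/-- The exponent of `v^a / v_i`. -/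
noncomputable def Mon.lower {s : ℕ} (a : Mon n (s + 1)) (i : Fin (n + 1)) (h : a.1 i ≠ 0) :
    Mon n s :=
  ⟨a.1 - Finsupp.single i 1, by
    have h1 : a.1 - Finsupp.single i 1 + Finsupp.single i 1 = a.1 :=
      tsub_add_cancel_of_le (by simpa [Nat.one_le_iff_ne_zero] using h)
    have h2 : a.1.degree = s + 1 := a.2
    rw [← h1, map_add, Finsupp.degree_single] at h2
    simpa using h2⟩

variable (p n) in
/-- The coefficients of a homogeneous polynomial of degree `s`. -/
noncomputable def polyCoeff (s : ℕ) : PolyS p n s →ₗ[ZMod p] (Mon n s → ZMod p) where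
  toFun q a := q.1.coeff a.1
  map_add' _ _ := by ext; simp
  map_smul' _ _ := by ext; simp

lemma polyCoeff_bijective (s : ℕ) : Function.Bijective (polyCoeff p n s) := by
  constructor
  · intro q r h
    refine Subtype.ext (MvPolynomial.ext _ _ fun a => ?_)
    by_cases ha : a.degree = s
    · exact congrFun h ⟨a, ha⟩
    · rw [MvPolynomial.IsHomogeneous.coeff_eq_zero q.2 ha,
        MvPolynomial.IsHomogeneous.coeff_eq_zero r.2 ha]
  · intro f
    have := Fintype.ofFinite (Mon n s)
    refine ⟨∑ a : Mon n s, ⟨MvPolynomial.monomial a.1 (f a),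
      MvPolynomial.isHomogeneous_monomial _ a.2⟩, ?_⟩
    ext b
    simp only [polyCoeff, LinearMap.coe_mk, AddHom.coe_mk, AddSubmonoidClass.coe_finsetSum,
      MvPolynomial.coeff_sum, MvPolynomial.coeff_monomial]
    rw [Finset.sum_eq_single b]
    · simp
    · intro a _ hab
      rw [if_neg fun h => hab (Subtype.ext h)]
    · simp

variable (p n) in
/-- The monomial basis of the space of homogeneous polynomials of degree `s`. -/
noncomputable def polyBasis (s : ℕ) : Module.Basis (Mon n s) (ZMod p) (PolyS p n s) :=
  .ofEquivFun (.ofBijective (polyCoeff p n s) (polyCoeff_bijective s))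

lemma polyBasis_repr {s : ℕ} (q : PolyS p n s) (a : Mon n s) :
    (polyBasis p n s).repr q a = q.1.coeff a.1 := by
  simp [polyBasis, polyCoeff]

/-! ### Homomorphisms out of the Koszul terms -/

section Hom

variable (M : Type) [AddCommGroup M] [Module (ExtAlg p n) M] [Module (ZMod p) M]
    [IsScalarTower (ZMod p) (ExtAlg p n) M]

open Classical in
variable (p n) in
/-- The coefficients in `M` of an element of `M ⊗ 𝔽_p[v]_s`. -/
noncomputable def kCoeff (s : ℕ) : KTerm p n M s ≃ₗ[ZMod p] (Mon n s → M) :=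
  TensorProduct.equivFinsuppOfBasisRight (polyBasis p n s) ≪≫ₗ
    Finsupp.linearEquivFunOnFinite (ZMod p) M (Mon n s)

variable {M}

lemma kCoeff_tmul {s : ℕ} (m : M) (q : PolyS p n s) (a : Mon n s) :
    kCoeff p n M s (m ⊗ₜ q) a = q.1.coeff a.1 • m := by
  simp [kCoeff, polyBasis_repr]

lemma kCoeff_KD {s : ℕ} (x : KTerm p n M s) (a : Mon n (s + 1)) :
    kCoeff p n M (s + 1) (KD p n M s x) a =
      ∑ i, if h : a.1 i = 0 then 0 else Qgen p n i • kCoeff p n M s x (a.lower i h) := by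
  induction x using TensorProduct.induction_on with
  | zero => simp
  | add x y hx hy =>
    rw [map_add, map_add, Pi.add_apply, hx, hy, ← Finset.sum_add_distrib]
    refine Finset.sum_congr rfl fun i _ => ?_
    split_ifs <;> simp
  | tmul m q =>
    simp only [KD, LinearMap.sum_apply, map_sum, Finset.sum_apply, TensorProduct.map_tmul,
      kCoeff_tmul]
    refine Finset.sum_congr rfl fun i _ => ?_
    have h1 : ((mulX p n s i q).1 : MvPolynomial _ _) = MvPolynomial.X i * q.1 := rfl
    rw [h1, MvPolynomial.coeff_X_mul']
    by_cases h : a.1 i = 0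
    · simp [h]
    · rw [if_pos (Finsupp.mem_support_iff.2 h), dif_neg h]
      exact (smul_comm (Qgen p n i) (q.1.coeff (a.lower i h).1) m).symm

variable (p n) in
/-- The `s`-th term of the Koszul resolution, as an object of the category of `E`-modules. -/
noncomputable abbrev KosObj (s : ℕ) : ModuleCat (ExtAlg p n) :=
  ModuleCat.of (ExtAlg p n) (KosDeg p n s)

variable (p n) in
/-- The differential of the Koszul resolution. -/
noncomputable def kosDeg (s : ℕ) : KosObj p n (s + 1) ⟶ KosObj p n s :=
  ModuleCat.ofHom ((kosD p n).restrict fun _ hz => kosD_mem hz)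

variable (p n) in
/-- The basis vector of the Koszul resolution corresponding to a monomial. -/
noncomputable def kosBasis {s : ℕ} (a : Mon n s) : KosDeg p n s :=
  ⟨Finsupp.single a.1 1, Finsupp.single_mem_supported _ _ a.2⟩

lemma kosDeg_kosBasis {s : ℕ} (a : Mon n (s + 1)) :
    (kosDeg p n s).hom (kosBasis p n a) =
      ∑ i, if h : a.1 i = 0 then 0 else Qgen p n i • kosBasis p n (a.lower i h) := by
  apply Subtype.ext
  rw [AddSubmonoidClass.coe_finsetSum]
  change kosD p n (Finsupp.single a.1 1) = _
  rw [kosD, LinearMap.sum_apply]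
  refine Finset.sum_congr rfl fun i _ => ?_
  rw [kosDPart_single]
  split_ifs with h
  · rfl
  · simp [kosBasis, Mon.lower, Finsupp.smul_single]

section

variable [Fact p.Prime]

/-- The `𝔽_p`-linear structure on the category of `E`-modules restricts scalars along `𝔽_p → E`. -/
lemma smul_hom_apply {X Y : ModuleCat (ExtAlg p n)} (c : ZMod p) (f : X ⟶ Y) (x : X) :
    (c • f).hom x = algebraMap (ZMod p) (ExtAlg p n) c • f.hom x := by
  let _ := ModuleCat.moduleOfAlgebraModule (k := ZMod p) Y
  have := ModuleCat.isScalarTower_of_algebra_moduleCat (k := ZMod p) Y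
  have h : (c • f).hom x = c • f.hom x := by
    with_reducible_and_instances rfl
  rw [h]
  exact (algebraMap_smul (ExtAlg p n) c (f.hom x)).symm

variable (p n M) in
/-- The `𝔽_p`-vector space of homomorphisms from the `s`-th term of the Koszul resolution to `M`,
which is the `s`-th term of the complex computing `Ext`. Its scalar action is the one of the linear
category of `E`-modules; going through `linearYoneda` keeps it apart from the action induced by the
given `𝔽_p`-module structure of `M`. -/
noncomputable abbrev KosHom (s : ℕ) : ModuleCat (ZMod p) :=
  ((linearYoneda (ZMod p) (ModuleCat (ExtAlg p n))).obj (ModuleCat.of (ExtAlg p n) M)).obj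
    (Opposite.op (KosObj p n s))

variable (p n M) in
/-- The values of a homomorphism on the basis of the `s`-th term of the Koszul resolution. -/
noncomputable def evalBasis (s : ℕ) : KosHom p n M s →ₗ[ZMod p] (Mon n s → M) where
  toFun (f : KosObj p n s ⟶ ModuleCat.of (ExtAlg p n) M) a := f.hom (kosBasis p n a)
  map_add' _ _ := rfl
  map_smul' c f := by
    ext a
    refine (smul_hom_apply (X := KosObj p n s) (Y := ModuleCat.of (ExtAlg p n) M) c f
      (kosBasis p n a)).trans ?_
    exact algebraMap_smul (ExtAlg p n) c (ModuleCat.Hom.hom (R := ExtAlg p n)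
      (A := KosObj p n s) (B := ModuleCat.of (ExtAlg p n) M) f (kosBasis p n a) : M)

lemma evalBasis_bijective (s : ℕ) : Function.Bijective (evalBasis p n M s) := by
  let e : KosDeg p n s ≃ₗ[ExtAlg p n] (Mon n s →₀ ExtAlg p n) :=
    Finsupp.supportedEquivFinsupp _
  have he (a : Mon n s) : e.symm (Finsupp.single a 1) = kosBasis p n a := by
    apply Subtype.ext
    exact Finsupp.supportedEquivFinsupp_symm_single _ a _
  constructor
  · intro (f : KosObj p n s ⟶ ModuleCat.of (ExtAlg p n) M)
      (g : KosObj p n s ⟶ ModuleCat.of (ExtAlg p n) M) h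
    apply ModuleCat.hom_ext
    have : f.hom ∘ₗ e.symm.toLinearMap = g.hom ∘ₗ e.symm.toLinearMap := by
      apply Finsupp.lhom_ext'
      intro a
      apply LinearMap.ext_ring
      simp only [LinearMap.comp_apply, Finsupp.lsingle_apply, LinearEquiv.coe_coe, he]
      exact congrFun h a
    ext x
    simpa using LinearMap.congr_fun this (e x)
  · intro g
    refine ⟨ModuleCat.ofHom (Finsupp.linearCombination (ExtAlg p n) g ∘ₗ e.toLinearMap), ?_⟩
    ext a
    change Finsupp.linearCombination (ExtAlg p n) g (e (kosBasis p n a)) = g a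
    rw [← he, LinearEquiv.apply_symm_apply, Finsupp.linearCombination_single, one_smul]

variable (p n M) in
/-- The `s`-th term of `K(M)` is the space of homomorphisms from the `s`-th term of the Koszul
resolution to `M`. -/
noncomputable def homEquiv (s : ℕ) :
    KTerm p n M s ≃ₗ[ZMod p] KosHom p n M s :=
  kCoeff p n M s ≪≫ₗ (LinearEquiv.ofBijective _ (evalBasis_bijective s)).symm

lemma evalBasis_homEquiv {s : ℕ} (x : KTerm p n M s) :
    evalBasis p n M s (homEquiv p n M s x) = kCoeff p n M s x :=
  LinearEquiv.apply_symm_apply (LinearEquiv.ofBijective _ (evalBasis_bijective s)) _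

lemma homEquiv_KD {s : ℕ} (x : KTerm p n M s) :
    homEquiv p n M (s + 1) (KD p n M s x) =
      (kosDeg p n s ≫ homEquiv p n M s x : KosObj p n (s + 1) ⟶ ModuleCat.of (ExtAlg p n) M) := by
  apply (evalBasis_bijective (s + 1)).1
  rw [evalBasis_homEquiv]
  ext a
  rw [kCoeff_KD]
  change _ = ModuleCat.Hom.hom (R := ExtAlg p n) (A := KosObj p n s)
    (B := ModuleCat.of (ExtAlg p n) M) (homEquiv p n M s x) ((kosDeg p n s).hom (kosBasis p n a))
  rw [kosDeg_kosBasis, map_sum, ← evalBasis_homEquiv]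
  refine Finset.sum_congr rfl fun i _ => ?_
  split_ifs with h
  · simp
  · rw [map_smul]; rfl

end

end Hom

/-! ### The resolution -/

variable (p n) in
/-- The Koszul chain complex. -/
noncomputable def kosComplex : ChainComplex (ModuleCat (ExtAlg p n)) ℕ :=
  ChainComplex.of (KosObj p n) (kosDeg p n) fun s => by
    apply ModuleCat.hom_ext
    apply LinearMap.ext
    intro z
    exact Subtype.ext (kosD_kosD z.1)

lemma kosComplex_d (s : ℕ) : (kosComplex p n).d (s + 1) s = kosDeg p n s :=
  ChainComplex.of_d ..

variable (p n) in
/-- The augmentation of the Koszul complex. -/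
noncomputable def kosAug : KosObj p n 0 ⟶ ModuleCat.of (ExtAlg p n) (Aug p n) :=
  ModuleCat.ofHom
    { toFun z := (aug p n (z.1 0) : ZMod p)
      map_add' z w := map_add (aug p n) (z.1 0) (w.1 0)
      map_smul' x z := map_mul (aug p n) x (z.1 0) }

lemma kosDeg_kosAug : kosDeg p n 0 ≫ kosAug p n = 0 := by
  ext z
  change aug p n (kosD p n z.1 0) = 0
  suffices h : ∀ z, aug p n (kosD p n z 0) = 0 from h _
  intro z
  induction z using Finsupp.induction_linear with
  | zero => simp
  | add f g hf hg => rw [map_add, Finsupp.add_apply, map_add, hf, hg, add_zero]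
  | single a x =>
    rw [kosD, LinearMap.sum_apply, Finsupp.finsetSum_apply, map_sum]
    refine Finset.sum_eq_zero fun i _ => ?_
    rw [kosDPart_single]
    split_ifs
    · simp
    · rw [Finsupp.single_apply]
      split_ifs <;> simp [aug_Qgen]

lemma kosAug_exact (z : KosDeg p n 0) (hz : (kosAug p n).hom z = 0) :
    ∃ w, (kosDeg p n 0).hom w = z := by
  obtain ⟨w, hw, h⟩ := exists_kosD_eq (z.1 0)
  refine ⟨⟨w, hw⟩, Subtype.ext (h.trans ?_)⟩
  have hz' : aug p n (z.1 0) = 0 := hz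
  rw [hz', map_zero (algebraMap (ZMod p) (ExtAlg p n)), sub_zero]
  ext1 a
  by_cases ha : a = 0
  · simp [ha]
  · rw [Finsupp.single_eq_of_ne ha]
    by_contra h0
    have h1 : a.degree = 0 := z.2 (Finsupp.mem_support_iff.2 (Ne.symm h0))
    exact ha ((Finsupp.degree_eq_zero_iff a).1 h1)

lemma kosAug_surjective : Function.Surjective (kosAug p n).hom := by
  intro c
  refine ⟨⟨Finsupp.single 0 (algebraMap (ZMod p) _ c),
    Finsupp.single_mem_supported _ _ (by simp)⟩, ?_⟩
  change aug p n ((Finsupp.single 0 (algebraMap (ZMod p) _ c) : KosTot p n) 0) = c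
  rw [Finsupp.single_eq_same]
  exact AlgHom.commutes (aug p n) c

lemma kosComplex_exactAt (s : ℕ) : (kosComplex p n).ExactAt (s + 1) := by
  rw [HomologicalComplex.exactAt_iff' _ (s + 2) (s + 1) s (by simp) (by simp),
    ShortComplex.moduleCat_exact_iff]
  intro z hz
  change ((kosComplex p n).d (s + 1) s).hom z = 0 at hz
  change ∃ w, ((kosComplex p n).d (s + 2) (s + 1)).hom w = z
  rw [kosComplex_d] at hz ⊢
  obtain ⟨w, hw, h⟩ := kosD_exact z.2 (congrArg Subtype.val hz)
  exact ⟨⟨w, hw⟩, Subtype.ext h⟩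

instance (s : ℕ) : Projective (KosObj p n s) := by
  have : Module.Projective (ExtAlg p n) (KosDeg p n s) :=
    .of_equiv (Finsupp.supportedEquivFinsupp _).symm
  exact (IsProjective.iff_projective _).1 this

variable (p n) in
/-- The augmentation `kosAug`, as a chain map to the augmentation module in degree `0`. -/
noncomputable def kosAugMap : kosComplex p n ⟶
    (ChainComplex.single₀ (ModuleCat (ExtAlg p n))).obj (ModuleCat.of (ExtAlg p n) (Aug p n)) :=
  (ChainComplex.toSingle₀Equiv _ _).symm ⟨kosAug p n, by
    rw [kosComplex_d]; exact kosDeg_kosAug⟩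

lemma kosAugMap_f_zero : (kosAugMap p n).f 0 = kosAug p n :=
  ChainComplex.toSingle₀Equiv_symm_apply_f_zero (C := kosComplex p n)
    (X := ModuleCat.of (ExtAlg p n) (Aug p n)) (kosAug p n) _

variable (p n) in
/-- The Koszul resolution of the augmentation module. -/
noncomputable def kosResolution :
    ProjectiveResolution (ModuleCat.of (ExtAlg p n) (Aug p n)) where
  complex := kosComplex p n
  projective s := inferInstanceAs (Projective (KosObj p n s))
  π := kosAugMap p n
  quasiIso := ⟨fun s => by
    cases s with
    | zero =>
      rw [ChainComplex.quasiIsoAt₀_iff, ShortComplex.quasiIso_iff_of_zeros' _ rfl rfl rfl]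
      refine (ShortComplex.exact_and_epi_g_iff_of_iso (S₂ := ShortComplex.mk (kosDeg p n 0)
        (kosAug p n) kosDeg_kosAug) ?_).2 ⟨?_, ?_⟩
      · exact ShortComplex.isoMk (Iso.refl _) (Iso.refl _) (Iso.refl _)
          ((Category.id_comp _).trans ((kosComplex_d 0).symm.trans (Category.comp_id _).symm))
          ((Category.id_comp _).trans (kosAugMap_f_zero.symm.trans (Category.comp_id _).symm))
      · rw [ShortComplex.moduleCat_exact_iff]
        exact kosAug_exact
      · exact (ModuleCat.epi_iff_surjective _).2 kosAug_surjective
    | succ s =>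
      rw [quasiIsoAt_iff_exactAt']
      · exact kosComplex_exactAt s
      · exact ChainComplex.exactAt_succ_single_obj _ _⟩

/-! ### Passage to cohomology -/

/-- The homology of a cochain complex of modules, computed through an identification of its terms
with other modules under which the kernel and the image of the differentials are known. -/
lemma nonempty_homology_equiv {R : Type} [Ring R] (S : ShortComplex (ModuleCat.{0} R))
    {B : Type} [AddCommGroup B] [Module R B] (e : B ≃ₗ[R] S.X₂) (K I : Submodule R B)
    (hK : ∀ x, x ∈ K ↔ S.g.hom (e x) = 0) (hI : ∀ x, x ∈ I ↔ ∃ y, S.f.hom y = e x) :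
    Nonempty ((K ⧸ I.comap K.subtype) ≃ₗ[R] S.homology) := by
  have hK' : K.map (e : B →ₗ[R] S.X₂) = LinearMap.ker S.g.hom := by
    ext y
    obtain ⟨x, rfl⟩ := e.surjective y
    simp [hK]
  let eK : K ≃ₗ[R] LinearMap.ker S.g.hom := e.submoduleMap K ≪≫ₗ LinearEquiv.ofEq _ _ hK'
  have heK (x : K) : (eK x : S.X₂) = e x := rfl
  refine ⟨Submodule.Quotient.equiv _ _ eK ?_ ≪≫ₗ S.moduleCatHomologyIso.symm.toLinearEquiv⟩
  ext y
  obtain ⟨x, rfl⟩ := eK.surjective y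
  rw [Submodule.mem_map_equiv, LinearEquiv.symm_apply_apply, Submodule.mem_comap,
    Submodule.subtype_apply, hI, LinearMap.mem_range]
  exact exists_congr fun y => by rw [Subtype.ext_iff, heK]; rfl

end Koszul

/-- for every left `E`-module `M` and every `s ≥ 0`, the `s`-th
cohomology of `K(M)` is isomorphic as an `𝔽_p`-vector space to
`Ext_E^s(𝔽_p, M)`, the `s`-th Ext group, in the category of left `E`-modules,
of the augmentation module `𝔽_p` with coefficients in `M`. -/
theorem stmt5 (p n : ℕ) [Fact p.Prime] (M : Type) [AddCommGroup M]
    [Module (ExtAlg p n) M] [Module (ZMod p) M]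
    [IsScalarTower (ZMod p) (ExtAlg p n) M] (s : ℕ) :
    Nonempty (KH p n M s ≃ₗ[ZMod p]
      (((Ext (ZMod p) (ModuleCat (ExtAlg p n)) s).obj
          (Opposite.op (ModuleCat.of (ExtAlg p n) (Aug p n)))).obj
        (ModuleCat.of (ExtAlg p n) M))) := by
  open Koszul in
  let L := (kosComplex p n).linearYonedaObj (ZMod p) (ModuleCat.of (ExtAlg p n) M)
  -- The differential of `Hom(P, M)` is precomposition with the one of the Koszul complex.
  have hd (t : ℕ) (x : KTerm p n M t) :
      (L.d t (t + 1)).hom (homEquiv p n M t x) = homEquiv p n M (t + 1) (KD p n M t x) := by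
    rw [homEquiv_KD, ← kosComplex_d]
    rfl
  have hg (t : ℕ) (ht : t = s + 1) (x : KTerm p n M s) :
      x ∈ LinearMap.ker (KD p n M s) ↔ (L.d s t).hom (homEquiv p n M s x) = 0 := by
    subst ht
    rw [hd]
    exact (LinearEquiv.map_eq_zero_iff (homEquiv p n M (s + 1))).symm
  have hf (x : KTerm p n M s) : x ∈ LinearMap.range (KDto p n M s) ↔
      ∃ y, (L.d ((ComplexShape.up ℕ).prev s) s).hom y = homEquiv p n M s x := by
    cases s with
    | zero =>
      rw [L.shape _ _ (by simp)]
      constructor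
      · rintro ⟨y, rfl⟩
        refine ⟨0, ?_⟩
        rw [map_zero]
        exact (map_zero (homEquiv p n M 0)).symm
      · rintro ⟨y, hy⟩
        have hx : x = 0 := (LinearEquiv.map_eq_zero_iff (homEquiv p n M 0)).1 hy.symm
        exact hx ▸ zero_mem _
    | succ t =>
      rw [CochainComplex.prev_nat_succ]
      constructor
      · rintro ⟨y, rfl⟩
        exact ⟨homEquiv p n M t y, hd t y⟩
      · rintro ⟨y, hy⟩
        obtain ⟨z, rfl⟩ := (homEquiv p n M t).surjective y
        exact ⟨z, (homEquiv p n M (t + 1)).injective ((hd t z).symm.trans hy)⟩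
  obtain ⟨e⟩ := nonempty_homology_equiv (L.sc s) (homEquiv p n M s)
    (LinearMap.ker (KD p n M s)) (LinearMap.range (KDto p n M s))
    (hg _ (CochainComplex.next _ _)) hf
  exact ⟨e ≪≫ₗ ((kosResolution p n).isoExt s (ModuleCat.of (ExtAlg p n) M)).symm.toLinearEquiv⟩
end

section
/- Every nonzero homogeneous element of B of degree δ and weight w > 0 satisfies (p−1)·w ≤ p·δ and δ ≤ w − 1. -/
/-- The lower bound on the degree `2 * p ^ (j + 1) - 2` of `ξ_{j+1}`. -/
lemma gen_lower (p j : ℕ) :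
    (p - 1) * (2 * p ^ (j + 1)) ≤ p * (2 * p ^ (j + 1) - 2) := by
  have h : p ≤ p ^ (j + 1) := Nat.le_self_pow (by omega) p
  rw [Nat.sub_mul, Nat.mul_sub]
  omega

lemma monWt_lower (p n : ℕ) (m : Mon) :
    (p - 1) * monWt p n m ≤ p * monDeg p n m := by
  simp only [monWt, monDeg, Finsupp.sum, mul_add, Finset.mul_sum]
  gcongr ∑ j ∈ _, ?_ + ∑ k ∈ _, ?_ with j _ k _
  · rw [mul_left_comm, mul_left_comm p]
    exact Nat.mul_le_mul_left _ (gen_lower p j)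
  · rw [add_right_comm n 1 k]
    exact (gen_lower p (n + k)).trans (Nat.mul_le_mul_left _ (by omega))

/-- The weight of a monomial exceeds its degree by at least the number of its factors. -/
lemma monDeg_add_length_le {p : ℕ} (hp : 0 < p) (n : ℕ) (m : Mon) :
    monDeg p n m + (m.1.sum (fun _ e => e) + m.2.card) ≤ monWt p n m := by
  simp only [monWt, monDeg, Finsupp.sum, Finset.card_eq_sum_ones]
  rw [add_add_add_comm, ← Finset.sum_add_distrib, ← Finset.sum_add_distrib]
  gcongr ∑ j ∈ _, ?_ + ∑ k ∈ _, ?_ with j _ k _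
  · have h : 0 < p ^ (j + 1) := pow_pos hp _
    rw [← Nat.mul_succ]
    exact Nat.mul_le_mul_left _ (by omega)
  · have h : 0 < p ^ (n + 1 + k) := pow_pos hp _
    omega

lemma monDeg_lt_monWt {p : ℕ} (hp : 0 < p) (n : ℕ) (m : Mon) (h : 0 < monWt p n m) :
    monDeg p n m < monWt p n m := by
  have hle := monDeg_add_length_le hp n m
  by_contra! hge
  have h1 : m.1.sum (fun _ e => e) = 0 := by omega
  have h2 : m.2 = ∅ := Finset.card_eq_zero.mp (by omega)
  have h3 : ∀ j ∈ m.1.support, m.1 j = 0 := Finset.sum_eq_zero_iff.mp h1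
  have h4 : monWt p n m = 0 := by
    simp only [monWt, h2, Finset.sum_empty, add_zero, Finsupp.sum]
    exact Finset.sum_eq_zero fun j hj => by rw [h3 j hj, zero_mul]
  omega

/-- every nonzero homogeneous element of `B` of degree `δ` and
weight `w > 0` satisfies `(p−1)·w ≤ p·δ` and `δ ≤ w − 1`. -/
theorem stmt6 (p n : ℕ) [Fact p.Prime] (x : B p) (hx : x ≠ 0) (dlt w : ℕ)
    (hd : IsHomog p n x dlt) (hw : IsWeight p n x w) (hw0 : 0 < w) :
    (p - 1) * w ≤ p * dlt ∧ dlt ≤ w - 1 := by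
  have hp : 0 < p := (Fact.out : p.Prime).pos
  obtain ⟨m, hm⟩ := Finsupp.support_nonempty_iff.mpr hx
  rw [← hd m hm, ← hw m hm]
  rw [← hw m hm] at hw0
  exact ⟨monWt_lower p n m, Nat.le_sub_one_of_lt (monDeg_lt_monWt hp n m hw0)⟩
end
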